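/- Let β ∈ {0,1} and k ≥ 3 be an integer. Then there is a constant C_k depending only on k such that |m_β^{(k)}(r)| ≤ C_k r^{1−k} ⟨√β r⟩ ⟨r⟩^{-1/2} for all r > 0, where m_β^{(k)} denotes the k-th derivative of m_β. -/

import Mathlib

noncomputable section

open Real

/-- Japanese bracket `⟨x⟩ = (1+|x|²)^{1/2}`. -/
def jap (x : ℝ) : ℝ := Real.sqrt (1 + x ^ 2)

/-- The symbol `m_β(r) = √(r(1+βr²)tanh r)`. -/
def mSymb (β r : ℝ) : ℝ := Real.sqrt (r * (1 + β * r ^ 2) * Real.tanh r)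

/-!
Let `θ = r d/dr`. If `θ f = a f` and `a, θ a, …, θᵏ a` are bounded on `(0, ∞)`, then
`rᵏ f⁽ᵏ⁾ = Q f` with `Q` a polynomial in these functions, so `|f⁽ᵏ⁾| ≤ C r⁻ᵏ |f|`. For `f = m_β`,
`a = 1/2 + βr²/(1+βr²) + r / sinh 2r`. The first ratio `b` satisfies `θ b = 2b(1-b)` and
`0 ≤ b ≤ 1`, so it is bounded along with its `θ`-derivatives, uniformly in `β`. Writing
`d = x / sinh x` and `c = x coth x`, we have `θ d = d(1-c)` and `θ c = c - d²`: here `c` is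
unbounded, but the products `d cⁿ` are bounded and generate an algebra stable under `θ`. It remains
to bound `m_β` itself, which is `tanh r ≤ min(r, 1)`.
-/

open scoped NNReal Nat

theorem natCast_mul_pow_sub_one_mul {R : Type*} [Semiring R] (n : ℕ) (x : R) :
    n * (x ^ (n - 1) * x) = n * x ^ n := by
  rcases eq_or_ne n 0 with rfl | hn
  · rw [Nat.cast_zero, zero_mul, zero_mul]
  · rw [pow_sub_one_mul hn]

/-- The family `f i`, `i : ι`, is bounded on `(0, ∞)` uniformly in `i`; this is order `0` of
`IsEulerBounded`. -/
def IsBoundedOnPos {ι : Type*} (f : ι → ℝ → ℝ) : Prop :=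
  ∃ C, ∀ i r, 0 < r → |f i r| ≤ C

/-- The family `f i`, `i : ι`, is bounded on `(0, ∞)` together with its first `n` iterated
derivatives under the Euler operator `r d/dr`, uniformly in `i`: a symbol of order zero. The
Euler derivative is given by a witness `g`, whose values off `(0, ∞)` are irrelevant. -/
def IsEulerBounded {ι : Type*} : ℕ → (ι → ℝ → ℝ) → Prop
  | 0, f => IsBoundedOnPos f
  | n + 1, f => IsBoundedOnPos f ∧
      ∃ g, IsEulerBounded n g ∧ ∀ i r, 0 < r → HasDerivAt (f i) (g i r / r) r

namespace IsBoundedOnPos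

variable {ι : Type*} {f g : ι → ℝ → ℝ}

theorem const (c : ℝ) : IsBoundedOnPos fun (_ : ι) _ => c := ⟨|c|, fun _ _ _ => le_rfl⟩

theorem add (hf : IsBoundedOnPos f) (hg : IsBoundedOnPos g) : IsBoundedOnPos (f + g) := by
  obtain ⟨A, hA⟩ := hf
  obtain ⟨B, hB⟩ := hg
  exact ⟨A + B, fun i r hr => (abs_add_le _ _).trans (add_le_add (hA i r hr) (hB i r hr))⟩

theorem mul (hf : IsBoundedOnPos f) (hg : IsBoundedOnPos g) : IsBoundedOnPos (f * g) := by
  obtain ⟨A, hA⟩ := hf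
  obtain ⟨B, hB⟩ := hg
  refine ⟨A * B, fun i r hr => ?_⟩
  rw [Pi.mul_apply, Pi.mul_apply, abs_mul]
  exact mul_le_mul (hA i r hr) (hB i r hr) (abs_nonneg _) ((abs_nonneg _).trans (hA i r hr))

theorem comp_mul_left {c : ι → ℝ} (hc : ∀ i, 0 < c i) (hf : IsBoundedOnPos f) :
    IsBoundedOnPos fun i r => f i (c i * r) :=
  hf.imp fun _ hC i _ hr => hC i _ (mul_pos (hc i) hr)

end IsBoundedOnPos

namespace IsEulerBounded

variable {ι : Type*} {f g a : ι → ℝ → ℝ} {m n k : ℕ}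

theorem isBoundedOnPos (hf : IsEulerBounded n f) : IsBoundedOnPos f := by
  cases n with
  | zero => exact hf
  | succ n => exact hf.1

theorem of_succ (hf : IsEulerBounded (n + 1) f) : IsEulerBounded n f := by
  induction n generalizing f with
  | zero => exact hf.isBoundedOnPos
  | succ n ih =>
    obtain ⟨hbdd, f', hf', hderiv⟩ := hf
    exact ⟨hbdd, f', ih hf', hderiv⟩

theorem mono (hmn : m ≤ n) (hf : IsEulerBounded n f) : IsEulerBounded m f := by
  induction n, hmn using Nat.le_induction with
  | base => exact hf
  | succ n _ ih => exact ih hf.of_succ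

theorem const (c : ℝ) : IsEulerBounded n fun (_ : ι) _ => c := by
  induction n generalizing c with
  | zero => exact IsBoundedOnPos.const c
  | succ n ih => exact ⟨.const c, _, ih 0, fun _ r _ => by simpa using hasDerivAt_const r c⟩

theorem add (hf : IsEulerBounded n f) (hg : IsEulerBounded n g) : IsEulerBounded n (f + g) := by
  induction n generalizing f g with
  | zero => exact IsBoundedOnPos.add hf hg
  | succ n ih =>
    obtain ⟨hf, f', hf', hdf⟩ := hf
    obtain ⟨hg, g', hg', hdg⟩ := hg
    exact ⟨hf.add hg, _, ih hf' hg', fun i r hr =>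
      ((hdf i r hr).add (hdg i r hr)).congr_deriv (add_div _ _ _).symm⟩

theorem mul (hf : IsEulerBounded n f) (hg : IsEulerBounded n g) : IsEulerBounded n (f * g) := by
  induction n generalizing f g with
  | zero => exact IsBoundedOnPos.mul hf hg
  | succ n ih =>
    obtain ⟨hf₀, f', hf', hdf⟩ := id hf
    obtain ⟨hg₀, g', hg', hdg⟩ := id hg
    refine ⟨hf₀.mul hg₀, _, (ih hf' hg.of_succ).add (ih hf.of_succ hg'), fun i r hr =>
      ((hdf i r hr).mul (hdg i r hr)).congr_deriv ?_⟩
    simp only [Pi.add_apply, Pi.mul_apply]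
    ring

theorem comp_mul_left {c : ι → ℝ} (hc : ∀ i, 0 < c i) (hf : IsEulerBounded n f) :
    IsEulerBounded n fun i r => f i (c i * r) := by
  induction n generalizing f with
  | zero => exact IsBoundedOnPos.comp_mul_left hc hf
  | succ n ih =>
    obtain ⟨hf, f', hf', hderiv⟩ := hf
    refine ⟨hf.comp_mul_left hc, _, ih hf', fun i r hr => ?_⟩
    have hcr : HasDerivAt (c i * ·) (c i) r := by simpa using (hasDerivAt_id r).const_mul (c i)
    refine ((hderiv i _ (mul_pos (hc i) hr)).comp r hcr).congr_deriv ?_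
    have := (hc i).ne'
    field_simp

theorem exists_iteratedDeriv_eq (ha : IsEulerBounded (k + n) a)
    (hf : ∀ i r, 0 < r → HasDerivAt (f i) (a i r * f i r / r) r) :
    ∃ Q, IsEulerBounded n Q ∧
      ∀ i r, 0 < r → iteratedDeriv k (f i) r = Q i r * f i r / r ^ k := by
  induction k generalizing n with
  | zero => exact ⟨_, const 1, fun i r _ => by simp⟩
  | succ k ih =>
    obtain ⟨Q, hQ, hQf⟩ := ih (n := n + 1) (ha.mono (by lia))
    obtain ⟨-, Q', hQ', hdQ⟩ := id hQ
    refine ⟨_, hQ'.add (hQ.of_succ.mul ((ha.mono (by lia)).add (const (-k)))), fun i r hr => ?_⟩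
    have hlocal : iteratedDeriv k (f i) =ᶠ[nhds r] fun r => Q i r * f i r / r ^ k :=
      Filter.eventually_of_mem (Ioi_mem_nhds hr) (hQf i)
    have hderiv := ((hdQ i r hr).mul (hf i r hr)).div (hasDerivAt_pow k r) (pow_pos hr k).ne'
    rw [iteratedDeriv_succ, hlocal.deriv_eq]
    refine hderiv.deriv.trans ?_
    have hpow : (k : ℝ) * r ^ (k - 1) = k * r ^ k / r := by
      rw [eq_div_iff hr.ne', mul_assoc, natCast_mul_pow_sub_one_mul]
    simp only [hpow, Pi.add_apply, Pi.mul_apply]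
    field_simp
    ring

theorem exists_abs_iteratedDeriv_le (ha : IsEulerBounded k a)
    (hf : ∀ i r, 0 < r → HasDerivAt (f i) (a i r * f i r / r) r) :
    ∃ C > 0, ∀ i r, 0 < r → |iteratedDeriv k (f i) r| ≤ C * |f i r| / r ^ k := by
  obtain ⟨Q, ⟨C, hC⟩, hQ⟩ := exists_iteratedDeriv_eq (n := 0) ha hf
  refine ⟨max C 1, by positivity, fun i r hr => ?_⟩
  rw [hQ i r hr, abs_div, abs_mul, abs_of_pos (pow_pos hr k)]
  gcongr
  exact (hC i r hr).trans (le_max_left C 1)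

end IsEulerBounded

/-- The ratio `βr² / (1 + βr²)`, half the logarithmic Euler derivative of `1 + βr²`. -/
def betaRatio (β r : ℝ) : ℝ := β * r ^ 2 / (1 + β * r ^ 2)

theorem hasDerivAt_mul_sq {β r : ℝ} (hβ : 0 ≤ β) (hr : 0 < r) :
    HasDerivAt (fun r => β * r ^ 2) (2 * betaRatio β r * (1 + β * r ^ 2) / r) r := by
  have hsq : HasDerivAt (fun r => β * r ^ 2) (β * (2 * r)) r := by
    simpa using (hasDerivAt_pow 2 r).const_mul β
  refine hsq.congr_deriv ?_
  rw [betaRatio]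
  field_simp

theorem hasDerivAt_betaRatio {β r : ℝ} (hβ : 0 ≤ β) (hr : 0 < r) :
    HasDerivAt (betaRatio β) (2 * betaRatio β r * (1 - betaRatio β r) / r) r := by
  have hsq := hasDerivAt_mul_sq hβ hr
  have hne : 1 + β * r ^ 2 ≠ 0 := by positivity
  refine (hsq.div (hsq.const_add 1) hne).congr_deriv ?_
  unfold betaRatio
  field_simp

theorem abs_betaRatio_le_one {β : ℝ} (hβ : 0 ≤ β) (r : ℝ) : |betaRatio β r| ≤ 1 := by
  rw [betaRatio, abs_of_nonneg (by positivity), div_le_one (by positivity)]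
  linarith

theorem isEulerBounded_betaRatio (n : ℕ) : IsEulerBounded n fun β : ℝ≥0 => betaRatio β := by
  have hbdd : IsBoundedOnPos fun β : ℝ≥0 => betaRatio β :=
    ⟨1, fun β r _ => abs_betaRatio_le_one β.coe_nonneg r⟩
  induction n with
  | zero => exact hbdd
  | succ n ih =>
    refine ⟨hbdd, _, ((IsEulerBounded.const 2).mul ih).mul
      ((IsEulerBounded.const 1).add ((IsEulerBounded.const (-1)).mul ih)),
      fun β r hr => (hasDerivAt_betaRatio β.coe_nonneg hr).congr_deriv ?_⟩
    simp only [Pi.add_apply, Pi.mul_apply]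
    ring

/-- The function `x / sinh x`, the logarithmic Euler derivative of `tanh` at `x / 2`. -/
def divSinh (x : ℝ) : ℝ := x / sinh x

/-- The function `x coth x`, the logarithmic Euler derivative of `sinh`. -/
def mulCoth (x : ℝ) : ℝ := x * cosh x / sinh x

section Hyperbolic

variable {x : ℝ}

theorem hasDerivAt_divSinh (hx : 0 < x) :
    HasDerivAt divSinh (divSinh x * (1 - mulCoth x) / x) x := by
  have hs : sinh x ≠ 0 := (sinh_pos_iff.2 hx).ne'
  refine ((hasDerivAt_id x).div (hasDerivAt_sinh x) hs).congr_deriv ?_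
  simp only [divSinh, mulCoth, id]
  field_simp

theorem hasDerivAt_mulCoth (hx : 0 < x) :
    HasDerivAt mulCoth ((mulCoth x - divSinh x ^ 2) / x) x := by
  have hs : sinh x ≠ 0 := (sinh_pos_iff.2 hx).ne'
  refine (((hasDerivAt_id x).mul (hasDerivAt_cosh x)).div (hasDerivAt_sinh x) hs).congr_deriv ?_
  simp only [divSinh, mulCoth, id, Pi.mul_apply]
  field_simp
  linear_combination -x * cosh_sq x

theorem divSinh_nonneg (hx : 0 < x) : 0 ≤ divSinh x :=
  div_nonneg hx.le (sinh_pos_iff.2 hx).le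

theorem mulCoth_nonneg (hx : 0 < x) : 0 ≤ mulCoth x :=
  div_nonneg (mul_nonneg hx.le (cosh_pos x).le) (sinh_pos_iff.2 hx).le

theorem mulCoth_le (hx : 0 < x) : mulCoth x ≤ 1 + x := by
  rw [mulCoth, div_le_iff₀ (sinh_pos_iff.2 hx)]
  calc x * cosh x = x * exp (-x) + x * sinh x := by rw [← cosh_sub_sinh]; ring
    _ ≤ x * 1 + x * sinh x := by
        gcongr
        exact exp_le_one_iff.2 (by linarith)
    _ ≤ (1 + x) * sinh x := by linarith [self_le_sinh_iff.2 hx.le]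

theorem divSinh_le (hx : 0 < x) : divSinh x ≤ 2 * (1 + x) * exp (-x) := by
  have hexp : (1 + x) * exp (-x) ^ 2 ≤ 1 :=
    calc (1 + x) * exp (-x) ^ 2 ≤ exp x * exp (-x) ^ 2 := by
          gcongr
          linarith [add_one_le_exp x]
      _ = exp (-x) := by rw [sq, ← mul_assoc, ← exp_add, add_neg_cancel, exp_zero, one_mul]
      _ ≤ 1 := exp_le_one_iff.2 (by linarith)
  rw [divSinh, div_le_iff₀ (sinh_pos_iff.2 hx)]
  calc x ≤ (1 + x) - (1 + x) * exp (-x) ^ 2 := by linarith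
    _ = (1 + x) * (exp (-x) * exp x - exp (-x) ^ 2) := by
        rw [← exp_add, neg_add_cancel, exp_zero]; ring
    _ = 2 * (1 + x) * exp (-x) * sinh x := by rw [sinh_eq]; ring

theorem divSinh_mul_mulCoth_pow_le (n : ℕ) (hx : 0 < x) :
    divSinh x * mulCoth x ^ n ≤ 2 * ((n + 1)! * exp 1) := by
  have hpow : (1 + x) ^ (n + 1) ≤ (n + 1)! * exp (1 + x) :=
    (div_le_iff₀' (by positivity)).1 (pow_div_factorial_le_exp (1 + x) (by positivity) (n + 1))
  have := mulCoth_nonneg hx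
  calc divSinh x * mulCoth x ^ n
      ≤ (2 * (1 + x) * exp (-x)) * (1 + x) ^ n := by
        gcongr
        · exact divSinh_le hx
        · exact mulCoth_le hx
    _ = 2 * ((1 + x) ^ (n + 1) * exp (-x)) := by ring
    _ ≤ 2 * ((n + 1)! * exp (1 + x) * exp (-x)) := by gcongr
    _ = 2 * ((n + 1)! * exp 1) := by rw [mul_assoc _ (exp _), ← exp_add, add_neg_cancel_right]

theorem isEulerBounded_divSinh_mul_mulCoth_pow {ι : Type*} (k n : ℕ) :
    IsEulerBounded k fun (_ : ι) x => divSinh x * mulCoth x ^ n := by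
  have hbdd (n : ℕ) : IsBoundedOnPos fun (_ : ι) x => divSinh x * mulCoth x ^ n := by
    refine ⟨2 * ((n + 1)! * exp 1), fun _ x hx => ?_⟩
    rw [abs_of_nonneg (mul_nonneg (divSinh_nonneg hx) (pow_nonneg (mulCoth_nonneg hx) n))]
    exact divSinh_mul_mulCoth_pow_le n hx
  induction k generalizing n with
  | zero => exact hbdd n
  | succ k ih =>
    -- For `n = 0` the truncated `n - 1` is harmless: its term has the coefficient `n`.
    refine ⟨hbdd n, _, (((IsEulerBounded.const (1 + n)).mul (ih n)).add
        ((IsEulerBounded.const (-1)).mul (ih (n + 1)))).add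
        ((IsEulerBounded.const (-n)).mul ((ih 0).mul ((ih 0).mul (ih (n - 1))))),
      fun _ x hx => ((hasDerivAt_divSinh hx).mul ((hasDerivAt_mulCoth hx).pow n)).congr_deriv ?_⟩
    simp only [Pi.add_apply, Pi.mul_apply, Pi.pow_apply, pow_zero]
    linear_combination divSinh x / x * natCast_mul_pow_sub_one_mul n (mulCoth x)

theorem isEulerBounded_divSinh {ι : Type*} (n : ℕ) :
    IsEulerBounded n fun (_ : ι) => divSinh := by
  simpa using isEulerBounded_divSinh_mul_mulCoth_pow (ι := ι) n 0

theorem hasDerivAt_tanh (x : ℝ) : HasDerivAt tanh (1 / cosh x ^ 2) x := by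
  have h := (hasDerivAt_sinh x).div (hasDerivAt_cosh x) (cosh_pos x).ne'
  rw [← sq, ← sq, cosh_sq_sub_sinh_sq] at h
  exact h.congr_of_eventuallyEq (.of_forall tanh_eq_sinh_div_cosh)

theorem one_div_cosh_sq_eq (hx : 0 < x) : 1 / cosh x ^ 2 = divSinh (2 * x) * tanh x / x := by
  have hs : sinh x ≠ 0 := (sinh_pos_iff.2 hx).ne'
  have hc : cosh x ≠ 0 := (cosh_pos x).ne'
  rw [divSinh, sinh_two_mul, tanh_eq_sinh_div_cosh]
  field_simp

theorem tanh_pos (hx : 0 < x) : 0 < tanh x := by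
  rw [tanh_eq_sinh_div_cosh]
  exact div_pos (sinh_pos_iff.2 hx) (cosh_pos x)

theorem tanh_le_self (hx : 0 ≤ x) : tanh x ≤ x := by
  have hderiv (y : ℝ) : deriv tanh y ≤ 1 := by
    rw [(hasDerivAt_tanh y).deriv]
    exact div_le_one_of_le₀ (one_le_pow₀ (one_le_cosh y)) (by positivity)
  simpa using image_sub_le_mul_sub_of_deriv_le
    (fun y => (hasDerivAt_tanh y).differentiableAt) hderiv hx

end Hyperbolic

theorem jap_pos (x : ℝ) : 0 < jap x := sqrt_pos.2 (by positivity)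

theorem jap_sq (x : ℝ) : jap x ^ 2 = 1 + x ^ 2 := sq_sqrt (by positivity)

theorem jap_le_one_add_abs (x : ℝ) : jap x ≤ 1 + |x| := by
  simpa [jap] using sqrt_one_add_norm_sq_le x

theorem tanh_mul_jap_le {r : ℝ} (hr : 0 < r) : tanh r * jap r ≤ 2 * r :=
  calc tanh r * jap r ≤ tanh r * (1 + r) := by
        gcongr
        · exact (tanh_pos hr).le
        · simpa [abs_of_pos hr] using jap_le_one_add_abs r
    _ = tanh r + tanh r * r := by ring
    _ ≤ r + 1 * r := by
        gcongr
        · exact tanh_le_self hr.le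
        · exact (tanh_lt_one r).le
    _ = 2 * r := by ring

theorem mSymb_le {β r : ℝ} (hβ : 0 ≤ β) (hr : 0 < r) :
    mSymb β r ≤ √2 * (r * jap (√β * r) * jap r ^ (-(1 : ℝ) / 2)) := by
  have hjap := jap_pos r
  have hjapβ := jap_pos (√β * r)
  have hpow : (jap r ^ (-(1 : ℝ) / 2)) ^ 2 = (jap r)⁻¹ := by
    rw [← rpow_mul_natCast hjap.le, ← rpow_neg_one]
    norm_num
  have htanh : tanh r ≤ 2 * r * (jap r)⁻¹ := by
    rw [← div_eq_mul_inv, le_div_iff₀ hjap]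
    exact tanh_mul_jap_le hr
  refine sqrt_le_iff.2 ⟨by positivity, ?_⟩
  calc r * (1 + β * r ^ 2) * tanh r ≤ r * (1 + β * r ^ 2) * (2 * r * (jap r)⁻¹) := by gcongr
    _ = (√2 * (r * jap (√β * r) * jap r ^ (-(1 : ℝ) / 2))) ^ 2 := by
        simp only [mul_pow, hpow, jap_sq, sq_sqrt hβ, sq_sqrt zero_le_two]
        ring

/-- The logarithmic Euler derivative `r m_β'(r) / m_β(r)` of the symbol. -/
def mSymbLogDeriv (β r : ℝ) : ℝ := 1 / 2 + betaRatio β r + 1 / 2 * divSinh (2 * r)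

theorem hasDerivAt_sqrt_of_eulerLogDeriv {f : ℝ → ℝ} {a r : ℝ}
    (hf : HasDerivAt f (a * f r / r) r) (hpos : 0 < f r) :
    HasDerivAt (fun r => √(f r)) (a / 2 * √(f r) / r) r := by
  refine (hf.sqrt hpos.ne').congr_deriv ?_
  calc a * f r / r / (2 * √(f r)) = a / 2 * (f r / √(f r)) / r := by ring
    _ = a / 2 * √(f r) / r := by rw [div_sqrt]

theorem hasDerivAt_mSymb {β r : ℝ} (hβ : 0 ≤ β) (hr : 0 < r) :
    HasDerivAt (mSymb β) (mSymbLogDeriv β r * mSymb β r / r) r := by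
  have htanh := hasDerivAt_tanh r
  rw [one_div_cosh_sq_eq hr] at htanh
  have hradicand : HasDerivAt (fun r => r * (1 + β * r ^ 2) * tanh r)
      ((1 + 2 * betaRatio β r + divSinh (2 * r)) * (r * (1 + β * r ^ 2) * tanh r) / r) r := by
    have hsq := (hasDerivAt_mul_sq hβ hr).const_add 1
    refine (((hasDerivAt_id r).mul hsq).mul htanh).congr_deriv ?_
    simp only [id, Pi.mul_apply]
    field_simp
  have hpos : 0 < r * (1 + β * r ^ 2) * tanh r := mul_pos (by positivity) (tanh_pos hr)
  refine (hasDerivAt_sqrt_of_eulerLogDeriv hradicand hpos).congr_deriv ?_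
  rw [mSymbLogDeriv, mSymb]
  ring

theorem isEulerBounded_mSymbLogDeriv (n : ℕ) :
    IsEulerBounded n fun β : ℝ≥0 => mSymbLogDeriv β :=
  ((IsEulerBounded.const (1 / 2)).add (isEulerBounded_betaRatio n)).add
    ((IsEulerBounded.const (1 / 2)).mul
      ((isEulerBounded_divSinh n).comp_mul_left fun _ => two_pos))

theorem iteratedDeriv_mSymb_bound_general (k : ℕ) :
    ∃ C > (0 : ℝ), ∀ β : ℝ, 0 ≤ β → ∀ r : ℝ, 0 < r →
      |iteratedDeriv k (mSymb β) r| ≤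
        C * (r ^ ((1 : ℝ) - k) * jap (√β * r) * jap r ^ (-(1 : ℝ) / 2)) := by
  obtain ⟨C, hC, hbound⟩ := (isEulerBounded_mSymbLogDeriv k).exists_abs_iteratedDeriv_le
    (f := fun β : ℝ≥0 => mSymb β) fun β _ hr => hasDerivAt_mSymb β.coe_nonneg hr
  refine ⟨C * √2, by positivity, fun β hβ r hr => ?_⟩
  calc |iteratedDeriv k (mSymb β) r| ≤ C * |mSymb β r| / r ^ k := hbound ⟨β, hβ⟩ r hr
    _ ≤ C * (√2 * (r * jap (√β * r) * jap r ^ (-(1 : ℝ) / 2))) / r ^ k := by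
        rw [abs_of_nonneg (show 0 ≤ mSymb β r from sqrt_nonneg _)]
        gcongr
        exact mSymb_le hβ hr
    _ = C * √2 * (r ^ ((1 : ℝ) - k) * jap (√β * r) * jap r ^ (-(1 : ℝ) / 2)) := by
        rw [rpow_sub hr, rpow_one, rpow_natCast]
        ring

/-- For `β ∈ {0,1}` and `k ≥ 3`, `|m_β^{(k)}(r)| ≤ C_k r^{1-k} ⟨√β r⟩ ⟨r⟩^{-1/2}`
for all `r > 0`, with `C_k` depending only on `k`. -/
theorem iteratedDeriv_mSymb_bound (k : ℕ) (hk : 3 ≤ k) :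
    ∃ C > (0 : ℝ), ∀ β : ℝ, β = 0 ∨ β = 1 → ∀ r : ℝ, 0 < r →
      |iteratedDeriv k (mSymb β) r| ≤
        C * (r ^ ((1 : ℝ) - k) * jap (Real.sqrt β * r) * jap r ^ (-(1 : ℝ) / 2)) := by
  obtain ⟨C, hC, hbound⟩ := iteratedDeriv_mSymb_bound_general k
  refine ⟨C, hC, ?_⟩
  rintro β (rfl | rfl)
  exacts [hbound 0 le_rfl, hbound 1 zero_le_one]
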